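/- Let P be as in the context and let Ω ⊆ ℂ be open. Suppose that for every f ∈ C_0^∞(ℝ) with supp f ⊂ Ω ∩ ℝ and every almost holomorphic extension f̃ of f one has −(1/π)∫_ℂ (∂f̃/∂z̄)(z)·(z·1 − P)⁻¹ L(dz) = 0. Then Ω ∩ ℝ is contained in the resolvent set of P, i.e. Ω ∩ ℝ ∩ σ(P) = ∅. -/

import Mathlib

open MeasureTheory Complex Real

noncomputable section

/-- The Cauchy–Riemann operator `∂F/∂z̄ = (∂F/∂x + i ∂F/∂y)/2`. -/
def dbar (F : ℂ → ℂ) (z : ℂ) : ℂ :=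
  (fderiv ℝ F z 1 + Complex.I * fderiv ℝ F z Complex.I) / 2

/-- `F` is an almost holomorphic extension of `f ∈ C_0^∞(ℝ)`. -/
def IsAHExt (f : ℝ → ℂ) (F : ℂ → ℂ) : Prop :=
  ContDiff ℝ (⊤ : ℕ∞) F ∧ HasCompactSupport F ∧ (∀ x : ℝ, F x = f x) ∧
    ∀ N : ℕ, ∃ C : ℝ, ∀ z : ℂ, ‖dbar F z‖ ≤ C * |z.im| ^ N

/-- The resolvent `(z·1 − P)⁻¹` (equal to `0` when `z·1 − P` is not invertible). -/
def res {B : Type*} [NormedAddCommGroup B] [NormedSpace ℂ B] (P : B →L[ℂ] B) (z : ℂ) :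
    B →L[ℂ] B := Ring.inverse (z • (1 : B →L[ℂ] B) - P)

/-- The spectrum of `P` is real. -/
def RealSpectrum {B : Type*} [NormedAddCommGroup B] [NormedSpace ℂ B]
    (P : B →L[ℂ] B) : Prop := ∀ z ∈ spectrum ℂ P, z.im = 0

/-- The resolvent of `P` has locally temperate growth near `ℝ`. -/
def TemperateResolventLoc {B : Type*} [NormedAddCommGroup B] [NormedSpace ℂ B]
    (P : B →L[ℂ] B) : Prop :=
  ∀ R > (0:ℝ), ∃ C N : ℝ, 0 ≤ C ∧ 0 ≤ N ∧ ∀ z : ℂ, z.im ≠ 0 → ‖z‖ ≤ R →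
    ‖res P z‖ ≤ C * |z.im| ^ (-N)

/-!
Let `F` be almost holomorphic with compact support and `x` real. Since
`(x - a)(z - a)⁻¹ = 1 - (z - x)(z - a)⁻¹`, the Cauchy–Pompeiu formula gives
`(x - a) ∫ ∂F/∂z̄ (z - x)⁻¹ (z - a)⁻¹ = -π F(x) - ∫ ∂F/∂z̄ (z - a)⁻¹`; the left integral converges
because `∂F/∂z̄` is flat on `ℝ`. If the last integral vanishes while `F(x) ≠ 0`, then `x - a` is
invertible, because the two factors on the left commute.

Almost holomorphic extensions of `f` come from averaging along real lines: `∫ f (x + t y) k(t) dt`,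
for a rapidly decreasing `k` with moments `∫ tⁿ k(t) dt = iⁿ`, agrees to infinite order in `y` with
the Taylor series of `f (x + i y)`, which solves `∂F/∂z̄ = 0` formally.
-/

open Set Filter
open scoped ContDiff FourierTransform Topology

section Dbar

variable {F G : ℂ → ℂ} {z : ℂ}

lemma dbar_mul (hF : DifferentiableAt ℝ F z) (hG : DifferentiableAt ℝ G z) :
    dbar (fun w => F w * G w) z = F z * dbar G z + G z * dbar F z := by
  simp only [dbar, fderiv_fun_mul hF hG, add_apply, smul_apply, smul_eq_mul]
  ring

lemma dbar_mul_conj (F : ℂ → ℂ) (z u : ℂ) :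
    dbar F z * (starRingEnd ℂ) u = (fderiv ℝ F z u + I * fderiv ℝ F z (u * I)) / 2 := by
  have fderiv_eq (v : ℂ) : fderiv ℝ F z v = v.re * fderiv ℝ F z 1 + v.im * fderiv ℝ F z I := by
    conv_lhs => rw [show v = v.re • (1 : ℂ) + v.im • I by simp]
    rw [map_add, map_smul, map_smul, real_smul, real_smul]
  have conj_eq : (starRingEnd ℂ) u = u.re - u.im * I := by apply Complex.ext <;> simp
  rw [fderiv_eq u, fderiv_eq (u * I), dbar, conj_eq, mul_I_re, mul_I_im, ofReal_neg]
  linear_combination (-u.im * fderiv ℝ F z I / 2) * I_mul_I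

lemma continuous_dbar (hF : ContDiff ℝ 1 F) : Continuous (dbar F) := by
  have := hF.continuous_fderiv one_ne_zero
  unfold dbar
  fun_prop

lemma tsupport_dbar_subset (F : ℂ → ℂ) : tsupport (dbar F) ⊆ tsupport F :=
  (tsupport_comp_subset (g := fun L : ℂ →L[ℝ] ℂ => (L 1 + I * L I) / 2) (by simp) _).trans
    (tsupport_fderiv_subset ℝ)

lemma dbar_eq_zero_of_eventuallyEq_const {c : ℂ} (h : F =ᶠ[𝓝 z] fun _ => c) : dbar F z = 0 := by
  simp [dbar, h.fderiv_eq]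

end Dbar

lemma ae_im_ne_zero : ∀ᵐ z : ℂ, z.im ≠ 0 := by
  have ker_ne_top : LinearMap.ker imLm ≠ ⊤ := fun h => by
    simpa using (h ▸ Submodule.mem_top : I ∈ LinearMap.ker imLm)
  simpa [ae_iff] using! Measure.addHaar_submodule volume _ ker_ne_top

/-- `h` vanishes to infinite order along `ℝ`, uniformly in `ℂ`. The almost holomorphic functions
are those for which `dbar F` has this property. -/
def FlatOnReal (h : ℂ → ℂ) : Prop := ∀ N : ℕ, ∃ C : ℝ, ∀ z : ℂ, ‖h z‖ ≤ C * |z.im| ^ N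

namespace FlatOnReal

variable {g h : ℂ → ℂ}

lemma add (hg : FlatOnReal g) (hh : FlatOnReal h) : FlatOnReal fun z => g z + h z := fun N => by
  obtain ⟨C, hC⟩ := hg N
  obtain ⟨D, hD⟩ := hh N
  exact ⟨C + D, fun z => (norm_add_le _ _).trans (by linarith [hC z, hD z])⟩

lemma bdd_mul {C : ℝ} (hg : ∀ z, ‖g z‖ ≤ C) (hh : FlatOnReal h) :
    FlatOnReal fun z => g z * h z := fun N => by
  obtain ⟨D, hD⟩ := hh N
  have hC : 0 ≤ C := (norm_nonneg _).trans (hg 0)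
  refine ⟨C * D, fun z => ?_⟩
  calc ‖g z * h z‖ = ‖g z‖ * ‖h z‖ := norm_mul _ _
    _ ≤ C * (D * |z.im| ^ N) := mul_le_mul (hg z) (hD z) (norm_nonneg _) hC
    _ = C * D * |z.im| ^ N := by ring

lemma div_sub_ofReal (hh : FlatOnReal h) (x : ℝ) : FlatOnReal fun z => h z / (z - x) := fun N => by
  obtain ⟨C, hC⟩ := hh (N + 1)
  refine ⟨|C|, fun z => ?_⟩
  have im_le : |z.im| ≤ ‖z - x‖ := by simpa using abs_im_le_norm (z - x)
  rw [norm_div]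
  refine div_le_of_le_mul₀ (norm_nonneg _) (by positivity) ?_
  calc ‖h z‖ ≤ |C| * |z.im| ^ (N + 1) := (hC z).trans (by gcongr; exact le_abs_self C)
    _ = |C| * |z.im| ^ N * |z.im| := by ring
    _ ≤ |C| * |z.im| ^ N * ‖z - x‖ := by gcongr

end FlatOnReal

section CauchyPompeiu

lemma integral_Ioi_fderiv_ray {V E : Type*} [NormedAddCommGroup V] [NormedSpace ℝ V]
    [NormedAddCommGroup E] [NormedSpace ℝ E] [CompleteSpace E] {F : V → E}
    (hF : ContDiff ℝ 1 F) (hFc : HasCompactSupport F) (a : V) {u : V} (hu : u ≠ 0) :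
    ∫ r in Ioi (0 : ℝ), fderiv ℝ F (a + r • u) u = -F a := by
  have ray_isClosedEmbedding : Topology.IsClosedEmbedding fun r : ℝ => a + r • u :=
    (Homeomorph.addLeft a).isClosedEmbedding.comp (isClosedEmbedding_smul_left hu)
  have ray_hasDerivAt (r : ℝ) : HasDerivAt (fun r : ℝ => a + r • u) u r := by
    simpa using ((hasDerivAt_id r).smul_const u).const_add a
  have ray_contDiff : ContDiff ℝ 1 fun r : ℝ => a + r • u := by fun_prop
  have deriv_eq (r : ℝ) : deriv (F ∘ fun r : ℝ => a + r • u) r = fderiv ℝ F (a + r • u) u :=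
    ((hF.differentiable one_ne_zero _).hasFDerivAt.comp_hasDerivAt r (ray_hasDerivAt r)).deriv
  simpa [deriv_eq] using (hFc.comp_isClosedEmbedding ray_isClosedEmbedding).integral_Ioi_deriv_eq
    (hF.comp ray_contDiff) 0

lemma integral_fderiv_circleMap_tangent {E : Type*} [NormedAddCommGroup E] [NormedSpace ℝ E]
    [CompleteSpace E] {F : ℂ → E} (hF : ContDiff ℝ 1 F) (a : ℂ) {r : ℝ} (hr : r ≠ 0) :
    ∫ θ in Ioo (-π) π, fderiv ℝ F (circleMap a r θ) (circleMap 0 1 θ * I) = 0 := by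
  have hasDerivAt_comp (θ : ℝ) : HasDerivAt (F ∘ circleMap a r)
      (r • fderiv ℝ F (circleMap a r θ) (circleMap 0 1 θ * I)) θ := by
    rw [← map_smul]
    convert (hF.differentiable one_ne_zero _).hasFDerivAt.comp_hasDerivAt θ
      (hasDerivAt_circleMap a r θ) using 2
    simp [circleMap, mul_assoc]
  have continuous_deriv :
      Continuous fun θ => r • fderiv ℝ F (circleMap a r θ) (circleMap 0 1 θ * I) := by
    have := hF.continuous_fderiv one_ne_zero
    fun_prop
  have endpoints_eq : circleMap a r π = circleMap a r (-π) := by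
    rw [← periodic_circleMap a r (-π)]
    ring_nf
  have ftc := intervalIntegral.integral_eq_sub_of_hasDerivAt (fun θ _ => hasDerivAt_comp θ)
    (continuous_deriv.intervalIntegrable (-π) π)
  rw [intervalIntegral.integral_smul, Function.comp_apply, Function.comp_apply, endpoints_eq,
    sub_self, intervalIntegral.integral_of_le (by linarith [pi_pos]),
    integral_Ioc_eq_integral_Ioo] at ftc
  exact (smul_eq_zero.1 ftc).resolve_left hr

lemma integrableOn_polarCoord_target_comp_circleMap {E : Type*} [NormedAddCommGroup E]
    [NormedSpace ℝ E] {L : ℂ → ℂ →L[ℝ] E} (hL : Continuous L) (hLc : HasCompactSupport L) (a : ℂ)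
    {v : ℝ → ℂ} (hv : Continuous v) :
    IntegrableOn (fun p : ℝ × ℝ => L (circleMap a p.1 p.2) (v p.2)) polarCoord.target := by
  obtain ⟨R, hR⟩ := hLc.isCompact.isBounded.subset_closedBall a
  have integrableOn_Icc : IntegrableOn (fun p : ℝ × ℝ => L (circleMap a p.1 p.2) (v p.2))
      (Icc 0 R ×ˢ Icc (-π) π) := by
    refine ContinuousOn.integrableOn_compact (isCompact_Icc.prod isCompact_Icc)
      (Continuous.continuousOn ?_)
    unfold circleMap
    fun_prop
  refine integrableOn_Icc.of_forall_sdiff_eq_zero polarCoord.open_target.measurableSet ?_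
  rintro ⟨r, θ⟩ ⟨⟨hr, hθ⟩, hrθ⟩
  have lt_r : R < r := lt_of_not_ge fun h => hrθ ⟨⟨hr.le, h⟩, Ioo_subset_Icc_self hθ⟩
  have notMem : circleMap a r θ ∉ tsupport L := fun h =>
    lt_r.not_ge (by simpa [circleMap, abs_of_pos (mem_Ioi.1 hr)] using hR h)
  simp [image_eq_zero_of_notMem_tsupport notMem]

lemma integral_polarCoord_target_fderiv_radial {F : ℂ → ℂ} (hF : ContDiff ℝ 1 F)
    (hFc : HasCompactSupport F) (a : ℂ) :
    ∫ p in polarCoord.target, fderiv ℝ F (circleMap a p.1 p.2) (circleMap 0 1 p.2) =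
      -(2 * π * F a) := by
  have radial (θ : ℝ) :
      ∫ r in Ioi (0 : ℝ), fderiv ℝ F (circleMap a r θ) (circleMap 0 1 θ) = -F a := by
    simpa [circleMap] using integral_Ioi_fderiv_ray hF hFc a
      (circleMap_ne_center (c := 0) (R := 1) (θ := θ) one_ne_zero)
  have integrable := integrableOn_polarCoord_target_comp_circleMap
    (hF.continuous_fderiv one_ne_zero) (hFc.fderiv ℝ) a (continuous_circleMap 0 1)
  rw [polarCoord_target, Measure.volume_eq_prod] at integrable ⊢
  rw [← setIntegral_prod_swap]
  refine (setIntegral_prod _ integrable.swap).trans ?_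
  simp only [Function.comp_apply, Prod.swap_prod_mk, radial, setIntegral_const,
    volume_real_Ioo_of_le (neg_le_self pi_pos.le), real_smul]
  push_cast
  ring

lemma integral_polarCoord_target_fderiv_tangent {F : ℂ → ℂ} (hF : ContDiff ℝ 1 F)
    (hFc : HasCompactSupport F) (a : ℂ) :
    ∫ p in polarCoord.target, fderiv ℝ F (circleMap a p.1 p.2) (circleMap 0 1 p.2 * I) = 0 := by
  have integrable := integrableOn_polarCoord_target_comp_circleMap
    (hF.continuous_fderiv one_ne_zero) (hFc.fderiv ℝ) a
    ((continuous_circleMap 0 1).mul_const I)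
  rw [polarCoord_target, Measure.volume_eq_prod] at integrable ⊢
  rw [setIntegral_prod _ integrable]
  exact setIntegral_eq_zero_of_forall_eq_zero fun r hr =>
    integral_fderiv_circleMap_tangent hF a (ne_of_gt hr)

lemma polarCoord_smul_dbar_div (F : ℂ → ℂ) (a : ℂ) {p : ℝ × ℝ} (hp : p.1 ≠ 0) :
    p.1 • (dbar F (Complex.polarCoord.symm p + a) / Complex.polarCoord.symm p) =
      (fderiv ℝ F (circleMap a p.1 p.2) (circleMap 0 1 p.2) +
        I * fderiv ℝ F (circleMap a p.1 p.2) (circleMap 0 1 p.2 * I)) / 2 := by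
  have r_ne_zero : (p.1 : ℂ) ≠ 0 := ofReal_ne_zero.2 hp
  have symm_eq : Complex.polarCoord.symm p = p.1 * circleMap 0 1 p.2 := by
    simp [Complex.polarCoord_symm_apply, circleMap, exp_mul_I]
  have inv_eq : (circleMap 0 1 p.2)⁻¹ = (starRingEnd ℂ) (circleMap 0 1 p.2) :=
    inv_eq_conj (by simp)
  have point_eq : p.1 * circleMap 0 1 p.2 + a = circleMap a p.1 p.2 := by
    simp [circleMap, add_comm]
  rw [← dbar_mul_conj, symm_eq, point_eq, ← inv_eq, real_smul]
  field_simp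

theorem integral_dbar_div_sub {F : ℂ → ℂ} (hF : ContDiff ℝ 1 F) (hFc : HasCompactSupport F)
    (a : ℂ) : ∫ z, dbar F z / (z - a) = -(π * F a) := by
  have hL := hF.continuous_fderiv one_ne_zero
  have integrable_radial := integrableOn_polarCoord_target_comp_circleMap hL (hFc.fderiv ℝ) a
    (continuous_circleMap 0 1)
  have integrable_tangent := integrableOn_polarCoord_target_comp_circleMap hL (hFc.fderiv ℝ) a
    ((continuous_circleMap 0 1).mul_const I)
  calc ∫ z, dbar F z / (z - a) = ∫ z, dbar F (z + a) / z := by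
        simpa using (integral_add_right_eq_self (fun z => dbar F z / (z - a)) a).symm
    _ = ∫ p in polarCoord.target, (fderiv ℝ F (circleMap a p.1 p.2) (circleMap 0 1 p.2) +
          I * fderiv ℝ F (circleMap a p.1 p.2) (circleMap 0 1 p.2 * I)) / 2 := by
        rw [← Complex.integral_comp_polarCoord_symm]
        exact setIntegral_congr_fun polarCoord.open_target.measurableSet
          fun p hp => polarCoord_smul_dbar_div F a (ne_of_gt hp.1)
    _ = -(π * F a) := by
        rw [integral_div, integral_add integrable_radial (integrable_tangent.const_mul I),
          integral_const_mul, integral_polarCoord_target_fderiv_radial hF hFc,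
          integral_polarCoord_target_fderiv_tangent hF hFc]
        ring

end CauchyPompeiu

section KernelExtension

/-- All moments of `k` converge absolutely. -/
def HasFiniteMoments (k : ℝ → ℂ) : Prop := ∀ n : ℕ, Integrable fun t : ℝ => (t : ℂ) ^ n * k t

/-- The extension `x + iy ↦ ∫ f (x + t y) k(t) dt` of `f` to `ℂ`. If the moments of `k` are the
powers of `i`, it has the formal Taylor series of `f (x + iy)` in `y`. -/
def kernelExtension (f k : ℝ → ℂ) (z : ℂ) : ℂ := ∫ t : ℝ, f (z.re + t * z.im) * k t

variable {f k : ℝ → ℂ}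

lemma HasFiniteMoments.integrable (hk : HasFiniteMoments k) : Integrable k := by
  simpa using hk 0

lemma HasFiniteMoments.ofReal_mul (hk : HasFiniteMoments k) :
    HasFiniteMoments fun t => t * k t := fun n => by
  simpa only [pow_succ, mul_assoc] using hk (n + 1)

lemma HasFiniteMoments.one_add_I_mul_ofReal_mul (hk : HasFiniteMoments k) :
    HasFiniteMoments fun t => (1 + I * t) * k t := fun n => by
  refine ((hk n).add ((hk (n + 1)).const_mul I)).congr (.of_forall fun t => ?_)
  simp only [Pi.add_apply]
  ring

lemma integrable_comp_line_mul (hf : Continuous f) (hfc : HasCompactSupport f) (hk : Integrable k)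
    (x y : ℝ) : Integrable fun t : ℝ => f (x + t * y) * k t := by
  obtain ⟨C, hC⟩ := hfc.exists_bound_of_continuous hf
  exact hk.bdd_mul (by fun_prop : Continuous fun t : ℝ => f (x + t * y)).aestronglyMeasurable
    (.of_forall fun t => hC _)

lemma exists_norm_kernelExtension_le (hf : Continuous f) (hfc : HasCompactSupport f)
    (hk : Integrable k) : ∃ C, ∀ z, ‖kernelExtension f k z‖ ≤ C := by
  obtain ⟨C, hC⟩ := hfc.exists_bound_of_continuous hf
  refine ⟨∫ t, C * ‖k t‖, fun z => ?_⟩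
  refine norm_integral_le_of_norm_le (hk.norm.const_mul C) (.of_forall fun t => ?_)
  rw [norm_mul]
  gcongr
  exact hC _

lemma kernelExtension_ofReal (f k : ℝ → ℂ) (x : ℝ) :
    kernelExtension f k x = f x * ∫ t, k t := by
  simp [kernelExtension, integral_const_mul]

lemma hasFDerivAt_comp_line_mul_const (hf : Differentiable ℝ f) (t : ℝ) (c z : ℂ) :
    HasFDerivAt (fun w : ℂ => f (w.re + t * w.im) * c)
      (reCLM.smulRight (deriv f (z.re + t * z.im) * c) +
        imCLM.smulRight (deriv f (z.re + t * z.im) * (t * c))) z := by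
  have line_hasFDerivAt : HasFDerivAt (fun w : ℂ => w.re + t * w.im) (reCLM + t • imCLM) z :=
    reCLM.hasFDerivAt.add (imCLM.hasFDerivAt.const_smul t)
  refine (((hf _).hasDerivAt.hasFDerivAt.comp z line_hasFDerivAt).mul_const c).congr_fderiv ?_
  ext v
  simp only [ContinuousLinearMap.comp_add, ContinuousLinearMap.comp_smulₛₗ, ringHom_apply, smul_add,
    add_apply, smul_apply, ContinuousLinearMap.comp_apply, reCLM_apply, imCLM_apply, real_smul,
    ContinuousLinearMap.toSpanSingleton_apply, smul_eq_mul, ContinuousLinearMap.smulRight_apply]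
  ring

lemma hasFDerivAt_kernelExtension (hf : ContDiff ℝ 1 f) (hfc : HasCompactSupport f)
    (hk : Integrable k) (htk : Integrable fun t : ℝ => t * k t) (z : ℂ) :
    HasFDerivAt (kernelExtension f k)
      (reCLM.smulRight (kernelExtension (deriv f) k z) +
        imCLM.smulRight (kernelExtension (deriv f) (fun t => t * k t) z)) z := by
  have hf' : Continuous (deriv f) := hf.continuous_deriv le_rfl
  obtain ⟨C, hC⟩ := hfc.deriv.exists_bound_of_continuous hf'
  let smulRight (L : ℂ →L[ℝ] ℝ) := ContinuousLinearMap.smulRightL ℝ ℂ ℂ L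
  have int_re := integrable_comp_line_mul hf' hfc.deriv hk z.re z.im
  have int_im := integrable_comp_line_mul hf' hfc.deriv htk z.re z.im
  have int_smul_re := (smulRight reCLM).integrable_comp int_re
  have int_smul_im := (smulRight imCLM).integrable_comp int_im
  have integral_fderiv := integral_add int_smul_re int_smul_im
  rw [(smulRight reCLM).integral_comp_comm int_re, (smulRight imCLM).integral_comp_comm int_im]
    at integral_fderiv
  refine (hasFDerivAt_integral_of_dominated_of_fderiv_le
    (bound := fun t => C * ‖k t‖ + C * ‖t * k t‖) univ_mem
    (.of_forall fun w => (integrable_comp_line_mul hf.continuous hfc hk _ _).aestronglyMeasurable)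
    (integrable_comp_line_mul hf.continuous hfc hk _ _)
    (int_smul_re.add int_smul_im).aestronglyMeasurable
    (.of_forall fun t w _ => ?_) ((hk.norm.const_mul C).add (htk.norm.const_mul C))
    (.of_forall fun t w _ => hasFDerivAt_comp_line_mul_const (hf.differentiable one_ne_zero)
      t (k t) w)).congr_fderiv integral_fderiv
  refine (norm_add_le _ _).trans ?_
  rw [ContinuousLinearMap.norm_smulRight_apply, ContinuousLinearMap.norm_smulRight_apply,
    reCLM_norm, imCLM_norm, one_mul, one_mul, norm_mul, norm_mul]
  gcongr <;> exact hC _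

lemma contDiff_kernelExtension (hf : ContDiff ℝ ∞ f) (hfc : HasCompactSupport f)
    (hk : HasFiniteMoments k) : ContDiff ℝ ∞ (kernelExtension f k) := by
  refine contDiff_infty.2 fun n => ?_
  induction n generalizing f k with
  | zero =>
    exact contDiff_zero.2 <| continuous_iff_continuousAt.2 fun z =>
      (hasFDerivAt_kernelExtension (hf.of_le (by simp)) hfc hk.integrable
        hk.ofReal_mul.integrable z).continuousAt
  | succ n ih =>
    have hf' : ContDiff ℝ ∞ (deriv f) := (contDiff_infty_iff_deriv.1 hf).2
    push_cast
    refine contDiff_succ_iff_hasFDerivAt.2 ⟨_, ?_, hasFDerivAt_kernelExtension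
      (hf.of_le (by simp)) hfc hk.integrable hk.ofReal_mul.integrable⟩
    exact ((ContinuousLinearMap.smulRightL ℝ ℂ ℂ reCLM).contDiff.comp (ih hf' hfc.deriv hk)).add
      ((ContinuousLinearMap.smulRightL ℝ ℂ ℂ imCLM).contDiff.comp
        (ih hf' hfc.deriv hk.ofReal_mul))

lemma dbar_kernelExtension (hf : ContDiff ℝ 1 f) (hfc : HasCompactSupport f)
    (hk : Integrable k) (htk : Integrable fun t : ℝ => t * k t) (z : ℂ) :
    dbar (kernelExtension f k) z =
      2⁻¹ * kernelExtension (deriv f) (fun t => (1 + I * t) * k t) z := by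
  have hf' : Continuous (deriv f) := hf.continuous_deriv le_rfl
  have add_eq : kernelExtension (deriv f) k z +
      I * kernelExtension (deriv f) (fun t => t * k t) z =
        kernelExtension (deriv f) (fun t => (1 + I * t) * k t) z := by
    simp only [kernelExtension]
    rw [← integral_const_mul, ← integral_add (integrable_comp_line_mul hf' hfc.deriv hk _ _)
      ((integrable_comp_line_mul hf' hfc.deriv htk _ _).const_mul I)]
    congr 1 with t
    ring
  rw [dbar, (hasFDerivAt_kernelExtension hf hfc hk htk z).fderiv, ← add_eq]
  simp only [add_apply, ContinuousLinearMap.smulRight_apply, reCLM_apply, one_re, one_smul,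
    imCLM_apply, one_im, zero_smul, add_zero, I_re, I_im, zero_add]
  ring

lemma hasDerivAt_kernelExtension_vertical (hf : ContDiff ℝ 1 f) (hfc : HasCompactSupport f)
    (hk : Integrable k) (htk : Integrable fun t : ℝ => t * k t) (x y : ℝ) :
    HasDerivAt (fun s : ℝ => kernelExtension f k (x + s * I))
      (kernelExtension (deriv f) (fun t => t * k t) (x + y * I)) y := by
  have line_hasDerivAt : HasDerivAt (fun s : ℝ => (x + s * I : ℂ)) I y := by
    simpa using ((hasDerivAt_id y).ofReal_comp.mul_const I).const_add (x : ℂ)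
  simpa using! (hasFDerivAt_kernelExtension hf hfc hk htk (x + y * I)).comp_hasDerivAt y
    line_hasDerivAt

lemma exists_norm_kernelExtension_le_abs_im_pow (N : ℕ) (hf : ContDiff ℝ ∞ f)
    (hfc : HasCompactSupport f) (hk : HasFiniteMoments k) :
    ∃ C, ∀ z : ℂ, (∀ n, iteratedDeriv n f z.re * ∫ t : ℝ, (t : ℂ) ^ n * k t = 0) →
      ‖kernelExtension f k z‖ ≤ C * |z.im| ^ N := by
  induction N generalizing f k with
  | zero =>
    obtain ⟨C, hC⟩ := exists_norm_kernelExtension_le hf.continuous hfc hk.integrable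
    exact ⟨C, fun z _ => by simpa using hC z⟩
  | succ N ih =>
    obtain ⟨C, hC⟩ := ih (contDiff_infty_iff_deriv.1 hf).2 hfc.deriv hk.ofReal_mul
    refine ⟨|C|, fun z hz => ?_⟩
    have base_eq_zero : kernelExtension f k (z.re + (0 : ℝ) * I) = 0 := by
      simpa [kernelExtension_ofReal] using hz 0
    have deriv_le (s : ℝ) (hs : s ∈ uIcc 0 z.im) :
        ‖kernelExtension (deriv f) (fun t => t * k t) (z.re + s * I)‖ ≤ |C| * |z.im| ^ N := by
      have abs_s_le : |s| ≤ |z.im| := by simpa using abs_sub_left_of_mem_uIcc hs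
      have moments_vanish (n : ℕ) : iteratedDeriv n (deriv f) z.re *
          ∫ t : ℝ, (t : ℂ) ^ n * (t * k t) = 0 := by
        simpa only [iteratedDeriv_succ', pow_succ, mul_assoc] using hz (n + 1)
      calc ‖kernelExtension (deriv f) (fun t => t * k t) (z.re + s * I)‖ ≤ C * |s| ^ N := by
            simpa using hC (z.re + s * I) (by simpa using moments_vanish)
        _ ≤ |C| * |z.im| ^ N := by gcongr; exact le_abs_self C
    have mean_value := (convex_uIcc 0 z.im).norm_image_sub_le_of_norm_hasDerivWithin_le
      (fun s _ => (hasDerivAt_kernelExtension_vertical (hf.of_le (by simp)) hfc hk.integrable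
        hk.ofReal_mul.integrable z.re s).hasDerivWithinAt)
      deriv_le left_mem_uIcc right_mem_uIcc
    rw [base_eq_zero, sub_zero, re_add_im, sub_zero, Real.norm_eq_abs] at mean_value
    exact mean_value.trans_eq (by ring)

end KernelExtension

section Kernel

lemma hasFiniteMoments_schwartzMap (k : SchwartzMap ℝ ℂ) : HasFiniteMoments k := fun n => by
  have := k.continuous
  exact (k.integrable_pow_mul volume n).mono' (by fun_prop) (.of_forall fun t => by simp)

lemma HasFiniteMoments.iteratedDeriv_fourier_zero {k : ℝ → ℂ} (hk : HasFiniteMoments k) (n : ℕ) :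
    iteratedDeriv n (𝓕 k) 0 = (-2 * π * I) ^ n * ∫ t : ℝ, (t : ℂ) ^ n * k t := by
  rw [Real.iteratedDeriv_fourier (N := ⊤) (fun n _ => by simpa using hk n) le_top,
    Real.fourier_eq, ← integral_const_mul]
  congr 1 with t
  simp only [inner_zero_right, neg_zero, AddChar.map_zero_eq_one, one_smul, smul_eq_mul]
  ring

lemma iteratedDeriv_cexp_const_mul_ofReal (c : ℂ) (n : ℕ) :
    iteratedDeriv n (fun x : ℝ => cexp (c * x)) = fun x : ℝ => c ^ n * cexp (c * x) := by
  induction n with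
  | zero => simp
  | succ n ih =>
    ext x
    have hasDerivAt_exp : HasDerivAt (fun x : ℝ => cexp (c * x)) (cexp (c * x) * c) x := by
      simpa using ((hasDerivAt_id x).ofReal_comp.const_mul c).cexp
    rw [iteratedDeriv_succ, ih, (hasDerivAt_exp.const_mul _).deriv]
    ring

theorem exists_hasFiniteMoments_integral_pow_mul_eq_I_pow :
    ∃ k : ℝ → ℂ, HasFiniteMoments k ∧ ∀ n : ℕ, ∫ t : ℝ, (t : ℂ) ^ n * k t = I ^ n := by
  -- The moments are read off the Fourier transform at `0`, so it suffices that `𝓕 k` agrees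
  -- with `exp (2 π x)` near `0`.
  let χ : ContDiffBump (0 : ℝ) := ⟨1, 2, one_pos, one_lt_two⟩
  let g : ℝ → ℂ := fun x => χ x * cexp (2 * π * x)
  have contDiff_g : ContDiff ℝ ∞ g :=
    (ofRealCLM.contDiff.comp χ.contDiff).mul (contDiff_const.mul ofRealCLM.contDiff).cexp
  have hasCompactSupport_g : HasCompactSupport g :=
    (χ.hasCompactSupport.comp_left ofReal_zero).mul_right
  have g_eq_exp : g =ᶠ[𝓝 0] fun x => cexp (2 * π * x) := by
    filter_upwards [χ.eventuallyEq_one] with x hx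
    simp [g, hx]
  let k : SchwartzMap ℝ ℂ := 𝓕⁻ (hasCompactSupport_g.toSchwartzMap contDiff_g)
  have fourier_k : 𝓕 (k : ℝ → ℂ) = g := by
    rw [← SchwartzMap.fourier_coe, FourierTransform.fourier_fourierInv_eq]
    rfl
  refine ⟨k, hasFiniteMoments_schwartzMap k, fun n => ?_⟩
  have moment_eq := (hasFiniteMoments_schwartzMap k).iteratedDeriv_fourier_zero n
  rw [fourier_k, g_eq_exp.iteratedDeriv_eq, iteratedDeriv_cexp_const_mul_ofReal] at moment_eq
  have ne_zero : (-2 * π * I : ℂ) ^ n ≠ 0 := by simp [pi_ne_zero]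
  refine mul_left_cancel₀ ne_zero (moment_eq.symm.trans ?_)
  rw [← mul_pow, mul_assoc _ I, I_mul_I]
  simp

end Kernel

section AlmostHolomorphicExtension

variable {f : ℝ → ℂ}

lemma flatOnReal_dbar_kernelExtension {k : ℝ → ℂ} (hf : ContDiff ℝ ∞ f)
    (hfc : HasCompactSupport f) (hk : HasFiniteMoments k)
    (hmom : ∀ n : ℕ, ∫ t : ℝ, (t : ℂ) ^ n * k t = I ^ n) :
    FlatOnReal (dbar (kernelExtension f k)) := by
  have moments_vanish (n : ℕ) : ∫ t : ℝ, (t : ℂ) ^ n * ((1 + I * t) * k t) = 0 := by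
    have split (t : ℝ) : (t : ℂ) ^ n * ((1 + I * t) * k t) =
        (t : ℂ) ^ n * k t + I * ((t : ℂ) ^ (n + 1) * k t) := by ring
    simp only [split]
    rw [integral_add (hk n) ((hk (n + 1)).const_mul I), integral_const_mul, hmom, hmom, pow_succ]
    linear_combination I ^ n * I_mul_I
  have flat : FlatOnReal (kernelExtension (deriv f) fun t => (1 + I * t) * k t) := fun N =>
    (exists_norm_kernelExtension_le_abs_im_pow N (contDiff_infty_iff_deriv.1 hf).2 hfc.deriv
      hk.one_add_I_mul_ofReal_mul).imp fun C hC z => hC z fun n => by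
        rw [moments_vanish, mul_zero]
  rw [show dbar (kernelExtension f k) = _ from funext <|
    dbar_kernelExtension (hf.of_le (by simp)) hfc hk.integrable hk.ofReal_mul.integrable]
  exact flat.bdd_mul fun _ => le_rfl

lemma exists_contDiff_tsupport_subset_eventually_eq_one {V : Type*} [NormedAddCommGroup V]
    [NormedSpace ℝ V] [FiniteDimensional ℝ V] {K U : Set V} (hK : IsCompact K) (hU : IsOpen U)
    (hKU : K ⊆ U) : ∃ χ : V → ℝ, ContDiff ℝ ∞ χ ∧ HasCompactSupport χ ∧ tsupport χ ⊆ U ∧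
      ∀ᶠ z in 𝓝ˢ K, χ z = 1 := by
  obtain ⟨L, hL, hKL, hLU⟩ := exists_compact_between hK hU hKU
  obtain ⟨χ, hχ_one, hχ_zero, -⟩ := exists_contMDiffMap_one_nhds_of_subset_interior
    (n := ⊤) (modelWithCornersSelf ℝ V) hK.isClosed hKL
  have tsupport_subset : tsupport χ ⊆ L :=
    closure_minimal (fun z hz => not_imp_comm.1 (hχ_zero z) hz) hL.isClosed
  exact ⟨χ, χ.contMDiff.contDiff, hL.of_isClosed_subset (isClosed_tsupport _) tsupport_subset,
    tsupport_subset.trans hLU, hχ_one⟩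

lemma iteratedDeriv_eq_zero_of_notMem_tsupport {x : ℝ} (hx : x ∉ tsupport f) (n : ℕ) :
    iteratedDeriv n f x = 0 := by
  rw [iteratedDeriv_eq_iteratedFDeriv,
    Function.notMem_support.1 fun h => hx (support_iteratedFDeriv_subset n h)]
  rfl

lemma exists_norm_kernelExtension_le_of_notMem_thickening {k : ℝ → ℂ} (hf : ContDiff ℝ ∞ f)
    (hfc : HasCompactSupport f) (hk : HasFiniteMoments k) {δ : ℝ} (δ_pos : 0 < δ) (N : ℕ) :
    ∃ C, ∀ z ∉ Metric.thickening δ (ofReal '' tsupport f),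
      ‖kernelExtension f k z‖ ≤ C * |z.im| ^ N := by
  obtain ⟨B, hB⟩ := exists_norm_kernelExtension_le hf.continuous hfc hk.integrable
  obtain ⟨C, hC⟩ := exists_norm_kernelExtension_le_abs_im_pow N hf hfc hk
  have B_nonneg : 0 ≤ B := (norm_nonneg _).trans (hB 0)
  refine ⟨max C (B / δ ^ N), fun z hzδ => ?_⟩
  by_cases hz : z.re ∈ tsupport f
  · have le_abs_im : δ ≤ |z.im| := by
      by_contra! abs_im_lt
      exact hzδ <| Metric.mem_thickening_iff.2
        ⟨z.re, mem_image_of_mem _ hz, by simpa [dist_of_re_eq] using abs_im_lt⟩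
    calc ‖kernelExtension f k z‖ ≤ B / δ ^ N * δ ^ N := by
          rw [div_mul_cancel₀ _ (by positivity)]
          exact hB z
      _ ≤ B / δ ^ N * |z.im| ^ N := by gcongr
      _ ≤ max C (B / δ ^ N) * |z.im| ^ N := by gcongr; exact le_max_right _ _
  · calc ‖kernelExtension f k z‖ ≤ C * |z.im| ^ N :=
          hC z fun n => by rw [iteratedDeriv_eq_zero_of_notMem_tsupport hz, zero_mul]
      _ ≤ max C (B / δ ^ N) * |z.im| ^ N := by gcongr; exact le_max_left _ _

lemma flatOnReal_kernelExtension_mul {k : ℝ → ℂ} (hf : ContDiff ℝ ∞ f)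
    (hfc : HasCompactSupport f) (hk : HasFiniteMoments k) {g : ℂ → ℂ} {D : ℝ}
    (hgD : ∀ z, ‖g z‖ ≤ D) (hg : ∀ᶠ z in 𝓝ˢ (ofReal '' tsupport f), g z = 0) :
    FlatOnReal fun z => kernelExtension f k z * g z := by
  obtain ⟨δ, δ_pos, hδ⟩ := (Metric.hasBasis_nhdsSet_thickening
    (hfc.isCompact.image continuous_ofReal)).eventually_iff.1 hg
  intro N
  obtain ⟨C, hC⟩ := exists_norm_kernelExtension_le_of_notMem_thickening hf hfc hk δ_pos N
  have D_nonneg : 0 ≤ D := (norm_nonneg _).trans (hgD 0)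
  refine ⟨|C| * D, fun z => ?_⟩
  beta_reduce
  by_cases hz : z ∈ Metric.thickening δ (ofReal '' tsupport f)
  · rw [hδ hz, mul_zero, norm_zero]
    positivity
  · calc ‖kernelExtension f k z * g z‖ = ‖kernelExtension f k z‖ * ‖g z‖ := norm_mul _ _
      _ ≤ (|C| * |z.im| ^ N) * D := by
        gcongr
        exacts [(hC z hz).trans (by gcongr; exact le_abs_self C), hgD z]
      _ = |C| * D * |z.im| ^ N := by ring

lemma isAHExt_mul_kernelExtension {k : ℝ → ℂ} {χ : ℂ → ℂ} (hf : ContDiff ℝ ∞ f)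
    (hfc : HasCompactSupport f) (hk : HasFiniteMoments k)
    (hmom : ∀ n : ℕ, ∫ t : ℝ, (t : ℂ) ^ n * k t = I ^ n) (hχ : ContDiff ℝ ∞ χ)
    (hχc : HasCompactSupport χ) (hχ_one : ∀ᶠ z in 𝓝ˢ (ofReal '' tsupport f), χ z = 1) :
    IsAHExt f fun z => χ z * kernelExtension f k z := by
  have hext := contDiff_kernelExtension hf hfc hk
  obtain ⟨C, hC⟩ := hχc.exists_bound_of_continuous hχ.continuous
  have dbar_hasCompactSupport : HasCompactSupport (dbar χ) :=
    hχc.mono' (subset_closure.trans (tsupport_dbar_subset χ))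
  obtain ⟨D, hD⟩ := dbar_hasCompactSupport.exists_bound_of_continuous
    (continuous_dbar (hχ.of_le (by simp)))
  have dbar_eq_zero : ∀ᶠ z in 𝓝ˢ (ofReal '' tsupport f), dbar χ z = 0 :=
    eventually_nhdsSet_iff_forall.2 fun z hz =>
      (eventually_nhdsSet_iff_forall.1 hχ_one z hz).eventually_nhds.mono fun w hw =>
        dbar_eq_zero_of_eventuallyEq_const hw
  refine ⟨hχ.mul hext, hχc.mul_right, fun x => ?_, ?_⟩
  · have integral_eq_one : ∫ t, k t = 1 := by simpa using hmom 0
    beta_reduce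
    rw [kernelExtension_ofReal, integral_eq_one, mul_one]
    by_cases hx : x ∈ tsupport f
    · rw [hχ_one.self_of_nhdsSet _ (mem_image_of_mem _ hx), one_mul]
    · rw [image_eq_zero_of_notMem_tsupport hx, mul_zero]
  · rw [show dbar (fun z => χ z * kernelExtension f k z) = _ from funext fun z =>
      dbar_mul (hχ.differentiable (by simp) z) (hext.differentiable (by simp) z)]
    exact ((flatOnReal_dbar_kernelExtension hf hfc hk hmom).bdd_mul hC).add
      (flatOnReal_kernelExtension_mul hf hfc hk hD dbar_eq_zero)

theorem exists_isAHExt_tsupport_subset (hf : ContDiff ℝ ∞ f) (hfc : HasCompactSupport f)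
    {U : Set ℂ} (hU : IsOpen U) (hfU : ∀ x ∈ tsupport f, (x : ℂ) ∈ U) :
    ∃ F, IsAHExt f F ∧ tsupport F ⊆ U := by
  obtain ⟨k, hk, hmom⟩ := exists_hasFiniteMoments_integral_pow_mul_eq_I_pow
  obtain ⟨χ, hχ, hχc, hχU, hχ_one⟩ := exists_contDiff_tsupport_subset_eventually_eq_one
    (hfc.isCompact.image continuous_ofReal) hU (image_subset_iff.2 hfU)
  exact ⟨_, isAHExt_mul_kernelExtension hf hfc hk hmom (ofRealCLM.contDiff.comp hχ)
    (hχc.comp_left ofReal_zero) (hχ_one.mono fun z hz => congrArg ofReal hz),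
    tsupport_mul_subset_left.trans ((tsupport_comp_subset ofReal_zero χ).trans hχU)⟩

end AlmostHolomorphicExtension

section Resolvent

variable {A : Type*} [NormedRing A] [NormedAlgebra ℂ A]

/-- `‖resolvent a z‖` grows at most polynomially in `|Im z|⁻¹` on `S`. Multiplying the bound out
lets `z` range over real points too, where for `N ≠ 0` nothing is demanded. -/
def TemperateResolventOn (a : A) (S : Set ℂ) : Prop :=
  ∃ C : ℝ, ∃ N : ℕ, ∀ z ∈ S, |z.im| ^ N * ‖resolvent a z‖ ≤ C

lemma sub_mul_resolvent {a : A} {z : ℂ} (hz : z ∉ spectrum ℂ a) (w : ℂ) :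
    (algebraMap ℂ A w - a) * resolvent a z = 1 - (z - w) • resolvent a z := by
  have resolvent_cancel : (algebraMap ℂ A z - a) * resolvent a z = 1 :=
    Ring.mul_inverse_cancel _ (spectrum.notMem_iff.1 hz)
  rw [← resolvent_cancel, Algebra.smul_def, map_sub]
  noncomm_ring

lemma commute_resolvent (a : A) (z : ℂ) : Commute a (resolvent a z) := by
  have commute_sub : Commute a (algebraMap ℂ A z - a) :=
    (Algebra.commute_algebraMap_right z a).sub_right (Commute.refl a)
  by_cases hz : IsUnit (algebraMap ℂ A z - a)
  · obtain ⟨u, hu⟩ := hz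
    rw [resolvent, ← hu, Ring.inverse_unit]
    exact (hu ▸ commute_sub).units_inv_right
  · rw [resolvent, Ring.inverse_non_unit _ hz]
    exact Commute.zero_right a

lemma commute_integral_smul_resolvent {a : A} {μ : Measure ℂ} {h : ℂ → ℂ}
    (hh : Integrable (fun z => h z • resolvent a z) μ) :
    Commute a (∫ z, h z • resolvent a z ∂μ) := by
  rw [Commute, SemiconjBy, ← integral_const_mul_of_integrable hh,
    ← integral_mul_const_of_integrable hh]
  exact integral_congr_ae (.of_forall fun z => (commute_resolvent a z).smul_right (h z))

variable [CompleteSpace A]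

lemma aestronglyMeasurable_resolvent (a : A) (μ : Measure ℂ) :
    AEStronglyMeasurable (resolvent a) μ := by
  have measurableSet_resolventSet : MeasurableSet (resolventSet ℂ a) :=
    (spectrum.isOpen_resolventSet a).measurableSet
  have resolvent_eq_indicator : resolvent a = (resolventSet ℂ a).indicator (resolvent a) :=
    (indicator_eq_self.2 fun z hz => not_not.1 fun hz' => hz (Ring.inverse_non_unit _ hz')).symm
  rw [resolvent_eq_indicator, aestronglyMeasurable_indicator_iff measurableSet_resolventSet]
  refine ContinuousOn.aestronglyMeasurable (fun z hz => ?_) measurableSet_resolventSet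
  exact (spectrum.hasDerivAt_resolvent_const_left hz).continuousAt.continuousWithinAt

lemma FlatOnReal.integrable_smul_resolvent {a : A} {h : ℂ → ℂ} {K : Set ℂ} (hh : FlatOnReal h)
    (hm : AEStronglyMeasurable h) (hK : IsCompact K) (hsupp : Function.support h ⊆ K)
    (hres : TemperateResolventOn a K) : Integrable fun z => h z • resolvent a z := by
  obtain ⟨C, N, hC⟩ := hres
  obtain ⟨D, hD⟩ := hh N
  have bound (z : ℂ) (hz : z ∈ K) : ‖h z • resolvent a z‖ ≤ |D| * C :=
    calc ‖h z • resolvent a z‖ = ‖h z‖ * ‖resolvent a z‖ := norm_smul _ _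
      _ ≤ |D| * |z.im| ^ N * ‖resolvent a z‖ := by
        gcongr
        exact (hD z).trans (by gcongr; exact le_abs_self D)
      _ = |D| * (|z.im| ^ N * ‖resolvent a z‖) := by ring
      _ ≤ |D| * C := by gcongr; exact hC z hz
  have support_subset : Function.support (fun z => h z • resolvent a z) ⊆ K :=
    (Function.support_smul_subset_left _ _).trans hsupp
  rw [← integrableOn_iff_integrable_of_support_subset support_subset]
  exact Measure.integrableOn_of_bounded hK.measure_lt_top.ne
    (hm.smul (aestronglyMeasurable_resolvent a _))
    (ae_restrict_of_forall_mem hK.measurableSet bound)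

variable {a : A} {F : ℂ → ℂ}

lemma integrable_dbar_smul_resolvent (hF : ContDiff ℝ 1 F) (hFc : HasCompactSupport F)
    (hflat : FlatOnReal (dbar F)) (hres : TemperateResolventOn a (tsupport F)) :
    Integrable fun z => dbar F z • resolvent a z :=
  hflat.integrable_smul_resolvent (continuous_dbar hF).aestronglyMeasurable hFc.isCompact
    (subset_closure.trans (tsupport_dbar_subset F)) hres

lemma integrable_dbar_div_sub_smul_resolvent (hF : ContDiff ℝ 1 F) (hFc : HasCompactSupport F)
    (hflat : FlatOnReal (dbar F)) (hres : TemperateResolventOn a (tsupport F)) (x : ℝ) :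
    Integrable fun z => (dbar F z / (z - x)) • resolvent a z := by
  have measurable_div : Measurable fun z => dbar F z / (z - x) :=
    (continuous_dbar hF).measurable.div (measurable_id.sub_const _)
  have support_subset : Function.support (fun z => dbar F z / (z - x)) ⊆ tsupport F := by
    rw [Function.support_div]
    exact inter_subset_left.trans (subset_closure.trans (tsupport_dbar_subset F))
  exact (hflat.div_sub_ofReal x).integrable_smul_resolvent measurable_div.aestronglyMeasurable
    hFc.isCompact support_subset hres

lemma sub_mul_integral_dbar_div_sub_smul_resolvent (hF : ContDiff ℝ 1 F)
    (hFc : HasCompactSupport F) (hflat : FlatOnReal (dbar F))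
    (hspec : ∀ z ∈ spectrum ℂ a, z ∈ tsupport F → z.im = 0)
    (hres : TemperateResolventOn a (tsupport F)) (x : ℝ) :
    (algebraMap ℂ A x - a) * ∫ z, (dbar F z / (z - x)) • resolvent a z =
      (-(π * F x)) • (1 : A) - ∫ z, dbar F z • resolvent a z := by
  have hdiv := integrable_dbar_div_sub_smul_resolvent hF hFc hflat hres x
  have integrand_eq : (fun z => (dbar F z / (z - x)) • (1 : A)) =ᵐ[volume] fun z =>
      (algebraMap ℂ A x - a) * ((dbar F z / (z - x)) • resolvent a z) +
        dbar F z • resolvent a z := by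
    filter_upwards [ae_im_ne_zero] with z hz
    by_cases hzF : z ∈ tsupport F
    · have sub_ne_zero : z - x ≠ 0 := fun h => hz (by simp [sub_eq_zero.1 h])
      rw [mul_smul_comm, sub_mul_resolvent (fun h => hz (hspec z h hzF)), smul_sub, smul_smul,
        div_mul_cancel₀ _ sub_ne_zero, sub_add_cancel]
    · simp [image_eq_zero_of_notMem_tsupport fun h => hzF (tsupport_dbar_subset F h)]
  rw [← integral_dbar_div_sub hF hFc x, ← integral_smul_const, integral_congr_ae integrand_eq,
    integral_add (hdiv.const_mul _) (integrable_dbar_smul_resolvent hF hFc hflat hres),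
    integral_const_mul_of_integrable hdiv, add_sub_cancel_right]

theorem notMem_spectrum_of_integral_dbar_smul_resolvent_eq_zero (hF : ContDiff ℝ 1 F)
    (hFc : HasCompactSupport F) (hflat : FlatOnReal (dbar F))
    (hspec : ∀ z ∈ spectrum ℂ a, z ∈ tsupport F → z.im = 0)
    (hres : TemperateResolventOn a (tsupport F))
    (hzero : ∫ z, dbar F z • resolvent a z = 0) {x : ℝ} (hx : F x ≠ 0) :
    (x : ℂ) ∉ spectrum ℂ a := by
  have mul_eq := sub_mul_integral_dbar_div_sub_smul_resolvent hF hFc hflat hspec hres x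
  rw [hzero, sub_zero, ← Algebra.algebraMap_eq_smul_one] at mul_eq
  have commute_sub : Commute (algebraMap ℂ A x - a)
      (∫ z, (dbar F z / (z - x)) • resolvent a z) :=
    (Algebra.commute_algebraMap_left _ _).sub_left
      (commute_integral_smul_resolvent
        (integrable_dbar_div_sub_smul_resolvent hF hFc hflat hres x))
  have isUnit_mul : IsUnit ((algebraMap ℂ A x - a) *
      ∫ z, (dbar F z / (z - x)) • resolvent a z) := by
    rw [mul_eq]
    exact (isUnit_iff_ne_zero.2 (by simp [hx, pi_ne_zero])).map (algebraMap ℂ A)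
  exact spectrum.notMem_iff.2 (commute_sub.isUnit_mul_iff.1 isUnit_mul).1

end Resolvent

lemma TemperateResolventLoc.temperateResolventOn {B : Type*} [NormedAddCommGroup B]
    [NormedSpace ℂ B] {P : B →L[ℂ] B} (hP : TemperateResolventLoc P) {K : Set ℂ}
    (hK : IsCompact K) : TemperateResolventOn P K := by
  obtain ⟨R, R_pos, hR⟩ := hK.isBounded.exists_pos_norm_le
  obtain ⟨C, M, C_nonneg, -, hC⟩ := hP R R_pos
  set N := ⌈M⌉₊ + 1
  have M_lt_N : M < N := (Nat.le_ceil M).trans_lt (by simp [N])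
  refine ⟨C * R ^ (N - M), N, fun z hz => ?_⟩
  rcases eq_or_ne z.im 0 with him | him
  · rw [him, abs_zero, zero_pow (by simp [N]), zero_mul]
    positivity
  · have abs_im_pos : 0 < |z.im| := abs_pos.2 him
    calc |z.im| ^ N * ‖resolvent P z‖ ≤ |z.im| ^ N * (C * |z.im| ^ (-M)) := by
          gcongr
          exact hC z him (hR z hz)
      _ = C * |z.im| ^ (N - M) := by
          rw [sub_eq_add_neg, Real.rpow_add abs_im_pos, Real.rpow_natCast]
          ring
      _ ≤ C * R ^ (N - M) := by
          gcongr
          exact (abs_im_le_norm z).trans (hR z hz)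

theorem support_contains_spectrum_general {A : Type*} [NormedRing A] [NormedAlgebra ℂ A]
    [CompleteSpace A] (a : A) {Ω : Set ℂ} (hΩ : IsOpen Ω)
    (hspec : ∀ z ∈ spectrum ℂ a, z ∈ Ω → z.im = 0)
    (hres : ∀ K ⊆ Ω, IsCompact K → TemperateResolventOn a K)
    (hvanish : ∀ f : ℝ → ℂ, ContDiff ℝ ∞ f → HasCompactSupport f →
      (∀ x ∈ tsupport f, (x : ℂ) ∈ Ω) → ∀ F : ℂ → ℂ, IsAHExt f F → tsupport F ⊆ Ω →
        ∫ z : ℂ, dbar F z • resolvent a z = 0) :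
    ∀ x : ℝ, (x : ℂ) ∈ Ω → (x : ℂ) ∉ spectrum ℂ a := by
  intro x hx
  obtain ⟨f, hf, hfc, hfΩ, hfx⟩ : ∃ f : ℝ → ℂ, ContDiff ℝ ∞ f ∧ HasCompactSupport f ∧
      (∀ y ∈ tsupport f, (y : ℂ) ∈ Ω) ∧ f x = 1 := by
    obtain ⟨g, hgΩ, hgc, hg, -, hgx⟩ := exists_contDiff_tsupport_subset (n := ⊤)
      ((hΩ.preimage continuous_ofReal).mem_nhds hx)
    exact ⟨_, ofRealCLM.contDiff.comp hg, hgc.comp_left ofReal_zero,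
      fun y hy => hgΩ (tsupport_comp_subset ofReal_zero g hy), congrArg ofReal hgx⟩
  obtain ⟨F, hF, hFΩ⟩ := exists_isAHExt_tsupport_subset hf hfc hΩ hfΩ
  obtain ⟨F_contDiff, F_compact, F_eq, F_flat⟩ := hF
  have Fx_ne_zero : F x ≠ 0 := by simp [F_eq, hfx]
  exact notMem_spectrum_of_integral_dbar_smul_resolvent_eq_zero (F_contDiff.of_le (by simp))
    F_compact F_flat (fun z hz hzF => hspec z hz (hFΩ hzF)) (hres _ hFΩ F_compact.isCompact)
    (hvanish f hf hfc hfΩ F ⟨F_contDiff, F_compact, F_eq, F_flat⟩ hFΩ) Fx_ne_zero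

/-- Example 3, second half: if `f(P) = 0` for every `f ∈ C_0^∞(ℝ)` supported in an
open set `Ω` (i.e. `Ω` avoids the support of the calculus), then `Ω ∩ ℝ` lies in the
resolvent set of `P`. -/
theorem support_contains_spectrum {B : Type*} [NormedAddCommGroup B] [NormedSpace ℂ B]
    [CompleteSpace B] (P : B →L[ℂ] B)
    (hspec : RealSpectrum P) (hres : TemperateResolventLoc P)
    (Ω : Set ℂ) (hΩ : IsOpen Ω)
    (hvanish : ∀ f : ℝ → ℂ, ContDiff ℝ (⊤ : ℕ∞) f → HasCompactSupport f →
      (∀ x ∈ tsupport f, (x : ℂ) ∈ Ω) →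
      ∀ F : ℂ → ℂ, IsAHExt f F →
        (-(1/(π:ℂ))) • ∫ z : ℂ, dbar F z • res P z = 0) :
    ∀ x : ℝ, (x : ℂ) ∈ Ω → (x : ℂ) ∉ spectrum ℂ P :=
  support_contains_spectrum_general P hΩ (fun z hz _ => hspec z hz)
    (fun _ _ hK => hres.temperateResolventOn hK) fun f hf hfc hfΩ F hF _ =>
      (smul_eq_zero.1 (hvanish f hf hfc hfΩ F hF)).resolve_left (by simp [pi_ne_zero])
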